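/- Let C be an [n,k] linear code over F_q and 1 ≤ i ≤ k. If D ⊆ C is a subcode that computes d_i (i.e. dim D = i and wt(D) = d_i(C)), or if D is a CEZ greedy i-subcode, then n(Supp(D)) = i, i.e. Supp(D) ∈ 𝒩_i for the matroid M_C. -/

import Mathlib

open Finset
open scoped Classical

noncomputable section

/-- The rank in the matroid `M_C`: `r(X)` is the rank of the column submatrix `H_X`. -/
def colRank {F : Type*} [Field F] {m n : ℕ} (H : Matrix (Fin m) (Fin n) F)
    (X : Finset (Fin n)) : ℕ :=
  Module.finrank F (Submodule.span F ((fun j i => H i j) '' (X : Set (Fin n))))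

/-- The nullity function of the matroid `M_C`: `n(X) = |X| - r(X)`. -/
def nulC {F : Type*} [Field F] {m n : ℕ} (H : Matrix (Fin m) (Fin n) F)
    (X : Finset (Fin n)) : ℕ :=
  X.card - colRank H X

/-- The support of a word. -/
def supp {F : Type*} [Field F] {n : ℕ} (c : Fin n → F) : Finset (Fin n) :=
  Finset.univ.filter (fun i => c i ≠ 0)

/-- The support of a subcode. -/
def suppD {F : Type*} [Field F] {n : ℕ} (D : Submodule F (Fin n → F)) : Finset (Fin n) :=
  Finset.univ.filter (fun i => ∃ c ∈ D, c i ≠ 0)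

/-- The weight of a subcode: the cardinality of its support. -/
def wt {F : Type*} [Field F] {n : ℕ} (D : Submodule F (Fin n → F)) : ℕ := (suppD D).card

/-- The subcode `C(X) = {c ∈ C : Supp(c) ⊆ X}`. -/
def codeRestrict {F : Type*} [Field F] {n : ℕ} (C : Submodule F (Fin n → F))
    (X : Finset (Fin n)) : Submodule F (Fin n → F) where
  carrier := {c | c ∈ C ∧ ∀ i ∉ X, c i = 0}
  add_mem' := by
    rintro a b ⟨ha, ha0⟩ ⟨hb, hb0⟩
    exact ⟨C.add_mem ha hb, fun i hi => by simp [Pi.add_apply, ha0 i hi, hb0 i hi]⟩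
  zero_mem' := ⟨C.zero_mem, fun i _ => rfl⟩
  smul_mem' := by
    rintro r a ⟨ha, ha0⟩
    exact ⟨C.smul_mem r ha, fun i hi => by simp [Pi.smul_apply, ha0 i hi]⟩

/-- The code defined by the parity check matrix `H`: `C = {x : H x = 0}`. -/
def codeOf {F : Type*} [Field F] {m n : ℕ} (H : Matrix (Fin m) (Fin n) F) :
    Submodule F (Fin n → F) :=
  LinearMap.ker H.mulVecLin

/-- The `r`-th generalized Hamming weight of a code `C`. -/
def dC {F : Type*} [Field F] {n : ℕ} (C : Submodule F (Fin n → F)) (r : ℕ) : ℕ :=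
  sInf {w | ∃ D : Submodule F (Fin n → F), D ≤ C ∧ Module.finrank F D = r ∧ wt D = w}

/-- `D` computes `d_r(C)`: `D ⊆ C`, `dim D = r` and `wt(D) = d_r(C)`. -/
def Computes {F : Type*} [Field F] {n : ℕ} (C : Submodule F (Fin n → F)) (r : ℕ)
    (D : Submodule F (Fin n → F)) : Prop :=
  D ≤ C ∧ Module.finrank F D = r ∧ wt D = dC C r

end
noncomputable section

/-- `D` is a CEZ greedy `i`-subcode of `C`: for `i = 1` a `1`-dimensional subcode of minimal
weight; for `i ≥ 2` an `i`-dimensional subcode containing some subcode computing `d_{i-1}(C)`,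
of minimal weight among all such. -/
def IsCEZ {F : Type*} [Field F] {n : ℕ} (C : Submodule F (Fin n → F)) (i : ℕ)
    (D : Submodule F (Fin n → F)) : Prop :=
  if i ≤ 1 then
    D ≤ C ∧ Module.finrank F D = 1 ∧
      ∀ D₂ ≤ C, Module.finrank F D₂ = 1 → wt D ≤ wt D₂
  else
    D ≤ C ∧ Module.finrank F D = i ∧ (∃ D', Computes C (i - 1) D' ∧ D' ≤ D) ∧
      ∀ D₂ ≤ C, Module.finrank F D₂ = i →
        (∃ D'', Computes C (i - 1) D'' ∧ D'' ≤ D₂) → wt D ≤ wt D₂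

lemma aux_rank_nullity {F V W : Type*} [Field F] [AddCommGroup V] [Module F V]
    [AddCommGroup W] [Module F W] [FiniteDimensional F V] (f : V →ₗ[F] W) (S : Submodule F V) :
    Module.finrank F (S.map f) + Module.finrank F (S ⊓ LinearMap.ker f : Submodule F V)
      = Module.finrank F S := by
  have h := LinearMap.finrank_range_add_finrank_ker (f.domRestrict S)
  rw [LinearMap.range_domRestrict, LinearMap.ker_domRestrict] at h
  rw [← h]
  congr 1
  rw [← Submodule.finrank_map_subtype_eq S ((LinearMap.ker f).comap S.subtype),
    Submodule.map_comap_subtype]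

lemma aux_extend {F V : Type*} [Field F] [AddCommGroup V] [Module F V]
    [FiniteDimensional F V] (B : Submodule F V) (d : ℕ) :
    ∀ A : Submodule F V, A ≤ B → Module.finrank F A + d ≤ Module.finrank F B →
      ∃ E, A ≤ E ∧ E ≤ B ∧ Module.finrank F E = Module.finrank F A + d := by
  induction d with
  | zero => exact fun A hA _ => ⟨A, le_rfl, hA, rfl⟩
  | succ d ih =>
    intro A hA hd
    have hlt : A < B := lt_of_le_of_ne hA (by rintro rfl; omega)
    obtain ⟨v, hvB, hvA⟩ := SetLike.exists_of_lt hlt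
    have h1 : A < A ⊔ Submodule.span F {v} := by
      refine lt_of_le_of_ne le_sup_left fun h => hvA ?_
      rw [h]
      exact Submodule.mem_sup_right (Submodule.mem_span_singleton_self v)
    have h2 := Submodule.finrank_lt_finrank_of_lt h1
    have h3 := Submodule.finrank_add_le_finrank_add_finrank A (Submodule.span F {v})
    have h4 : Module.finrank F (Submodule.span F {v}) ≤ 1 := by
      simpa using finrank_span_le_card (R := F) ({v} : Set V)
    have h5 : A ⊔ Submodule.span F {v} ≤ B :=
      sup_le hA (by simpa [Submodule.span_singleton_le_iff_mem] using hvB)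
    obtain ⟨E, hE1, hE2, hE3⟩ := ih _ h5 (by omega)
    exact ⟨E, h1.le.trans hE1, hE2, by omega⟩

lemma aux_mem_W {F : Type*} [Field F] {n : ℕ} (X : Finset (Fin n)) (c : Fin n → F) :
    c ∈ Submodule.span F ((fun j => (Pi.single j (1 : F) : Fin n → F)) '' (X : Set (Fin n))) ↔
      ∀ i ∉ X, c i = 0 := by
  constructor
  · intro h i hi
    induction h using Submodule.span_induction with
    | mem x hx =>
      obtain ⟨j, hj, rfl⟩ := hx
      have : i ≠ j := by rintro rfl; exact hi hj
      simp [this]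
    | zero => rfl
    | add x y _ _ hx hy => simp [hx, hy]
    | smul a x _ hx => simp [hx]
  · intro h
    rw [pi_eq_sum_univ' c]
    refine Submodule.sum_mem _ fun j _ => ?_
    by_cases hj : j ∈ X
    · refine Submodule.smul_mem _ _ (Submodule.subset_span ⟨j, hj, ?_⟩)
      ext l
      simp [Pi.single_apply]
    · simp [h j hj]

lemma aux_nul {F : Type*} [Field F] {m n : ℕ} (H : Matrix (Fin m) (Fin n) F)
    (X : Finset (Fin n)) : nulC H X = Module.finrank F (codeRestrict (codeOf H) X) := by
  have h := aux_rank_nullity H.mulVecLin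
    (Submodule.span F ((fun j => (Pi.single j (1 : F) : Fin n → F)) '' (X : Set (Fin n))))
  have h1 : Module.finrank F (Submodule.span F
      ((fun j => (Pi.single j (1 : F) : Fin n → F)) '' (X : Set (Fin n)))) = X.card := by
    have hli : LinearIndependent F (fun j : X => (Pi.single (j : Fin n) (1 : F) : Fin n → F)) :=
      (Pi.linearIndependent_single_one (Fin n) F).comp _ Subtype.val_injective
    have := finrank_span_eq_card hli
    rw [Fintype.card_coe] at this
    rw [← this, Set.image_eq_range]
    rfl
  have h2 : Submodule.span F ((fun j => (Pi.single j (1 : F) : Fin n → F)) '' (X : Set (Fin n)))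
      ⊓ LinearMap.ker H.mulVecLin = codeRestrict (codeOf H) X := by
    ext c
    rw [Submodule.mem_inf, aux_mem_W, and_comm]
    rfl
  have h3 : (Submodule.span F ((fun j => (Pi.single j (1 : F) : Fin n → F)) ''
      (X : Set (Fin n)))).map H.mulVecLin
      = Submodule.span F ((fun j i => H i j) '' (X : Set (Fin n))) := by
    rw [Submodule.map_span, Set.image_image]
    congr 2
    ext j i
    simp
  rw [h1, h2, h3] at h
  unfold nulC colRank
  omega

lemma aux_le_restrict {F : Type*} [Field F] {n : ℕ} (C D : Submodule F (Fin n → F))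
    (hD : D ≤ C) : D ≤ codeRestrict C (suppD D) := by
  intro c hc
  refine ⟨hD hc, fun i hi => ?_⟩
  by_contra h
  exact hi (by simp only [suppD, Finset.mem_filter, Finset.mem_univ, true_and]; exact ⟨c, hc, h⟩)

lemma aux_improve {F : Type*} [Field F] {n : ℕ} (C D D' : Submodule F (Fin n → F))
    (hDC : D ≤ C) (hD' : D' ≤ D) (j : Fin n) (hj : j ∈ suppD D) (hj' : j ∉ suppD D')
    (hdim : Module.finrank F D < Module.finrank F (codeRestrict C (suppD D))) :
    ∃ D₂ ≤ C, Module.finrank F D₂ = Module.finrank F D ∧ D' ≤ D₂ ∧ wt D₂ < wt D := by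
  set K := codeRestrict C (suppD D) with hK
  let p : (Fin n → F) →ₗ[F] F := LinearMap.proj j
  have h := aux_rank_nullity p K
  have h1 : Module.finrank F (K.map p) ≤ 1 := by
    simpa using Submodule.finrank_le (K.map p)
  have hle : D' ≤ K ⊓ LinearMap.ker p := by
    intro c hc
    refine ⟨aux_le_restrict C D hDC (hD' hc), ?_⟩
    exact (aux_le_restrict D' D' le_rfl hc).2 j hj'
  have h2 := Submodule.finrank_mono hD'
  obtain ⟨E, hE1, hE2, hE3⟩ := aux_extend (K ⊓ LinearMap.ker p)
    (Module.finrank F D - Module.finrank F D') D' hle (by omega)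
  refine ⟨E, fun c hc => (hE2 hc).1.1, by omega, hE1, ?_⟩
  refine Finset.card_lt_card (Finset.ssubset_iff_subset_ne.2 ⟨?_, ?_⟩)
  · intro l hl
    simp only [suppD, Finset.mem_filter, Finset.mem_univ, true_and] at hl
    obtain ⟨c, hc, hcl⟩ := hl
    by_contra hn
    exact hcl ((hE2 hc).1.2 l hn)
  · intro he
    rw [← he] at hj
    simp only [suppD, Finset.mem_filter, Finset.mem_univ, true_and] at hj
    obtain ⟨c, hc, hcl⟩ := hj
    exact hcl (hE2 hc).2

lemma aux_eq {F : Type*} [Field F] {m n : ℕ} (H : Matrix (Fin m) (Fin n) F)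
    (D : Submodule F (Fin n → F)) (hDC : D ≤ codeOf H)
    (h : ¬ Module.finrank F D < Module.finrank F (codeRestrict (codeOf H) (suppD D))) :
    nulC H (suppD D) = Module.finrank F D := by
  rw [aux_nul]
  have := Submodule.finrank_mono (aux_le_restrict _ D hDC)
  omega

lemma aux_min {F : Type*} [Field F] {m n : ℕ} (H : Matrix (Fin m) (Fin n) F)
    (D : Submodule F (Fin n → F)) (hDC : D ≤ codeOf H) (hpos : 1 ≤ Module.finrank F D)
    (hmin : ∀ D₂ ≤ codeOf H, Module.finrank F D₂ = Module.finrank F D → wt D ≤ wt D₂) :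
    nulC H (suppD D) = Module.finrank F D := by
  refine aux_eq H D hDC fun hlt => ?_
  have hne : D ≠ ⊥ := by rintro rfl; simp at hpos
  obtain ⟨c, hc, hc0⟩ := Submodule.exists_mem_ne_zero_of_ne_bot hne
  obtain ⟨j, hj⟩ := Function.ne_iff.1 hc0
  obtain ⟨D₂, h1, h2, -, h4⟩ := aux_improve (codeOf H) D ⊥ hDC bot_le j
    (by simp only [suppD, Finset.mem_filter, Finset.mem_univ, true_and]; exact ⟨c, hc, hj⟩)
    (by simp [suppD]) hlt
  have := hmin D₂ h1 h2
  omega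

lemma aux_computes {F : Type*} [Field F] {m n : ℕ} (H : Matrix (Fin m) (Fin n) F) (i : ℕ)
    (hi : 1 ≤ i) (D : Submodule F (Fin n → F)) (hD : Computes (codeOf H) i D) :
    nulC H (suppD D) = i := by
  obtain ⟨h1, h2, h3⟩ := hD
  rw [aux_min H D h1 (by omega), h2]
  intro D₂ h4 h5
  rw [h3]
  exact Nat.sInf_le ⟨D₂, h4, h5.trans h2, rfl⟩

/-- if `D ⊆ C` computes `d_i(C)` or is a CEZ greedy `i`-subcode (`1 ≤ i ≤ k`),
then `n(Supp(D)) = i`, i.e. `Supp(D) ∈ 𝒩_i` for the matroid `M_C`. -/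
theorem statement10 {F : Type*} [Field F] [Fintype F] {m k n : ℕ} (hmk : m + k = n)
    (H : Matrix (Fin m) (Fin n) F) (hH : H.rank = m)
    (i : ℕ) (hi1 : 1 ≤ i) (hik : i ≤ k)
    (D : Submodule F (Fin n → F))
    (hD : Computes (codeOf H) i D ∨ IsCEZ (codeOf H) i D) :
    nulC H (suppD D) = i := by
  rcases hD with hD | hD
  · exact aux_computes H i hi1 D hD
  · unfold IsCEZ at hD
    split_ifs at hD with hi
    · obtain ⟨h1, h2, h3⟩ := hD
      rw [aux_min H D h1 (by omega) (by rw [h2]; exact h3)]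
      omega
    · obtain ⟨h1, h2, ⟨D', hC, hle⟩, h4⟩ := hD
      rw [aux_eq H D h1, h2]
      intro hlt
      have hn := aux_computes H (i - 1) (by omega) D' hC
      have hsub : suppD D' ⊆ suppD D := by
        intro l hl
        simp only [suppD, Finset.mem_filter, Finset.mem_univ, true_and] at hl ⊢
        obtain ⟨c, hc, hcl⟩ := hl
        exact ⟨c, hle hc, hcl⟩
      have hne : ¬ suppD D ⊆ suppD D' := by
        intro hs
        rw [Finset.Subset.antisymm hsub hs, aux_nul] at hn
        omega
      obtain ⟨j, hj, hj'⟩ := Finset.not_subset.1 hne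
      obtain ⟨D₂, g1, g2, g3, g4⟩ := aux_improve (codeOf H) D D' h1 hle j hj hj' hlt
      have := h4 D₂ g1 (g2.trans h2) ⟨D', hC, g3⟩
      omega

end
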